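/- For any two distinct index pairs (k,j) ≠ (k',j') (with k,k' ≥ 0, 1 ≤ j ≤ 2^k, 1 ≤ j' ≤ 2^{k'}), the functions Z_{k,j} and Z_{k',j'} are orthogonal in L₂[0,1]: ∫₀¹ Z_{k,j}(t)·Z_{k',j'}(t) dt = 0. -/

import Mathlib

/-!
The function `Z_{k,j}` is, on its support `[m - h, m + h]` (with `h = 2^{-k}/2`), the multiple
`2^k √12 (1/2 - |t - m| / h)` of a centred tent (`Zfn_eq`).  The centred tent is even about `m` and
has mean zero, so it is orthogonal to every affine function (`integral_affine_mul_tent`).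

For two distinct indices with `k ≤ k'`, dyadic nesting puts the open support of `Z_{k',j'}` either
outside the open support of `Z_{k,j}` or inside one of its two halves; in each case `Z_{k,j}` is
affine there (`Zfn_affine`), and the product integrates to zero.
-/

open MeasureTheory Set
open scoped ENNReal

/-- The `L_∞`-normalized Haar function `h_{k,j}`. -/
noncomputable def haarFn (k j : ℕ) : ℝ → ℝ := fun x =>
  if ((j:ℝ) - 1) / 2 ^ k ≤ x ∧ x < ((j:ℝ) - 1/2) / 2 ^ k then 1
  else if ((j:ℝ) - 1/2) / 2 ^ k ≤ x ∧ x < (j:ℝ) / 2 ^ k then -1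
  else 0

/-- The Fourier–Haar coefficient `c_{k,j}(f) = 2^k ∫₀¹ f h_{k,j}`. -/
noncomputable def haarCoeff (k j : ℕ) (f : ℝ → ℝ) : ℝ :=
  2 ^ k * ∫ x in (0:ℝ)..1, f x * haarFn k j x

/-- The step function `χ_t`: equals `1` on `[0,t)` and `-1` on `[t,1]`. -/
noncomputable def chiStep (t : ℝ) : ℝ → ℝ := fun x => if x < t then 1 else -1

/-- `X_{k,j}(t) := c_{k,j}(χ_t)`. -/
noncomputable def Xfn (k j : ℕ) (t : ℝ) : ℝ := haarCoeff k j (chiStep t)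

/-- `Z_{k,j}(t) := 2^k · √12 · (X_{k,j}(t) - 1/2)` for
`t ∈ [(j-1)·2^{-k}, j·2^{-k}]`, and `0` otherwise. -/
noncomputable def Zfn (k j : ℕ) (t : ℝ) : ℝ :=
  if ((j:ℝ) - 1) / 2 ^ k ≤ t ∧ t ≤ (j:ℝ) / 2 ^ k then
    2 ^ k * Real.sqrt 12 * (Xfn k j t - 1/2)
  else 0

/-- The primitive of `haarFn k j` vanishing at `-∞`, written as a second difference of ramps. -/
noncomputable def haarPrim (k j : ℕ) (x : ℝ) : ℝ :=
  max (x - ((j:ℝ) - 1) / 2 ^ k) 0 - 2 * max (x - ((j:ℝ) - 1/2) / 2 ^ k) 0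
    + max (x - (j:ℝ) / 2 ^ k) 0

lemma hasDerivWithinAt_ramp (c x : ℝ) :
    HasDerivWithinAt (fun y => max (y - c) 0) (if c ≤ x then 1 else 0) (Ioi x) x := by
  split_ifs with h
  · refine ((hasDerivWithinAt_id x (Ioi x)).sub_const c).congr (fun y hy => ?_) ?_
    · exact max_eq_left (by have : x < y := hy; linarith)
    · exact max_eq_left (by linarith)
  · push Not at h
    refine ((hasDerivAt_const x (0:ℝ)).congr_of_eventuallyEq ?_).hasDerivWithinAt
    filter_upwards [Iio_mem_nhds h] with y hy
    exact max_eq_right (by have : y < c := hy; linarith)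

lemma haar_nodes (k j : ℕ) : ((j:ℝ) - 1) / 2 ^ k < ((j:ℝ) - 1/2) / 2 ^ k ∧
    ((j:ℝ) - 1/2) / 2 ^ k < (j:ℝ) / 2 ^ k := by
  constructor <;> (gcongr; linarith)

lemma haarFn_eq (k j : ℕ) (x : ℝ) : haarFn k j x =
    (if ((j:ℝ) - 1) / 2 ^ k ≤ x then (1:ℝ) else 0)
      - 2 * (if ((j:ℝ) - 1/2) / 2 ^ k ≤ x then (1:ℝ) else 0)
      + (if (j:ℝ) / 2 ^ k ≤ x then (1:ℝ) else 0) := by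
  obtain ⟨h1, h2⟩ := haar_nodes k j
  unfold haarFn
  generalize ((j:ℝ) - 1) / 2 ^ k = a at *
  generalize ((j:ℝ) - 1/2) / 2 ^ k = m at *
  generalize (j:ℝ) / 2 ^ k = b at *
  split_ifs <;> first | (exfalso; grind) | norm_num

lemma haarFn_intervalIntegrable (k j : ℕ) (u v : ℝ) :
    IntervalIntegrable (haarFn k j) volume u v := by
  have ind (c : ℝ) :
      IntervalIntegrable (fun x => if c ≤ x then (1:ℝ) else 0) volume u v := by
    apply Monotone.intervalIntegrable
    intro x y hxy
    dsimp only
    split_ifs <;> first | (exfalso; linarith) | norm_num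
  rw [show haarFn k j = _ from funext (haarFn_eq k j)]
  exact ((ind _).sub ((ind _).const_mul 2)).add (ind _)

lemma integral_haarFn (k j : ℕ) (u v : ℝ) :
    ∫ x in u..v, haarFn k j x = haarPrim k j v - haarPrim k j u := by
  refine intervalIntegral.integral_eq_sub_of_hasDeriv_right ?_ (fun x _ => ?_)
    (haarFn_intervalIntegrable k j u v)
  · unfold haarPrim
    fun_prop
  · rw [haarFn_eq]
    exact ((hasDerivWithinAt_ramp _ x).sub ((hasDerivWithinAt_ramp _ x).const_mul 2)).add
      (hasDerivWithinAt_ramp _ x)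

lemma integral_chiStep_mul {f : ℝ → ℝ} (hf : ∀ u v, IntervalIntegrable f volume u v)
    {t : ℝ} (h0 : 0 ≤ t) (h1 : t ≤ 1) :
    ∫ x in (0:ℝ)..1, chiStep t x * f x = (∫ x in (0:ℝ)..t, f x) - ∫ x in t..1, f x := by
  have e1 : EqOn f (fun x => chiStep t x * f x) (Ioo 0 t) := fun x hx => by
    simp [chiStep, hx.2]
  have e2 : EqOn (fun x => -f x) (fun x => chiStep t x * f x) (Ioo t 1) := fun x hx => by
    simp [chiStep, hx.1.le]
  have i1 : IntervalIntegrable (fun x => chiStep t x * f x) volume 0 t :=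
    (hf 0 t).congr_uIoo (by rwa [uIoo_of_le h0])
  have i2 : IntervalIntegrable (fun x => chiStep t x * f x) volume t 1 :=
    (hf t 1).neg.congr_uIoo (by rwa [uIoo_of_le h1])
  rw [← intervalIntegral.integral_add_adjacent_intervals i1 i2,
    ← intervalIntegral.integral_congr_uIoo (by rwa [uIoo_of_le h0]),
    ← intervalIntegral.integral_congr_uIoo (f := fun x => -f x) (a := t) (by rwa [uIoo_of_le h1]),
    intervalIntegral.integral_neg, sub_eq_add_neg]

/-- On its support, `Z_{k,j}` is the centred tent with midpoint `(j - 1/2) / 2^k` and half-width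
`2^{-k}/2`, scaled by `2^k √12`. -/
lemma Zfn_eq {k j : ℕ} (hj1 : 1 ≤ j) (hj2 : j ≤ 2 ^ k) {t : ℝ}
    (ha : ((j:ℝ) - 1) / 2 ^ k ≤ t) (hb : t ≤ (j:ℝ) / 2 ^ k) :
    Zfn k j t = 2 ^ k * Real.sqrt 12 *
      (1/2 - |t - ((j:ℝ) - 1/2) / 2 ^ k| / (1 / 2 ^ k / 2)) := by
  obtain ⟨h1, h2⟩ := haar_nodes k j
  have hj1R : (1:ℝ) ≤ j := by exact_mod_cast hj1
  have hj2R : (j:ℝ) ≤ 2 ^ k := by exact_mod_cast hj2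
  have hP : (0:ℝ) < 2 ^ k := by positivity
  have a0 : 0 ≤ ((j:ℝ) - 1) / 2 ^ k := div_nonneg (by linarith) hP.le
  have b1 : (j:ℝ) / 2 ^ k ≤ 1 := (div_le_one hP).2 hj2R
  rw [Zfn, if_pos ⟨ha, hb⟩, Xfn, haarCoeff,
    integral_chiStep_mul (haarFn_intervalIntegrable k j) (by linarith) (by linarith),
    integral_haarFn, integral_haarFn]
  congr 1
  -- The nodes are `m - h`, `m`, `m + h` with `h = 2^{-k}/2`.
  have hh : (0:ℝ) < 1 / 2 ^ k / 2 := by positivity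
  have ea : ((j:ℝ) - 1) / 2 ^ k = ((j:ℝ) - 1/2) / 2 ^ k - 1 / 2 ^ k / 2 := by ring
  have eb : (j:ℝ) / 2 ^ k = ((j:ℝ) - 1/2) / 2 ^ k + 1 / 2 ^ k / 2 := by ring
  have eP : (2:ℝ) ^ k = 1 / (2 * (1 / 2 ^ k / 2)) := by field_simp
  unfold haarPrim
  rw [ea] at ha a0 ⊢
  rw [eb] at hb b1 ⊢
  clear ea eb h1 h2
  generalize ((j:ℝ) - 1/2) / 2 ^ k = m at *
  generalize (1:ℝ) / 2 ^ k / 2 = h at *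
  rw [eP, max_eq_left (a := t - (m - h)) (by linarith),
    max_eq_right (a := t - (m + h)) (by linarith),
    max_eq_right (a := 0 - (m - h)) (by linarith),
    max_eq_right (a := 0 - m) (by linarith),
    max_eq_right (a := 0 - (m + h)) (by linarith),
    max_eq_left (a := 1 - (m - h)) (by linarith),
    max_eq_left (a := 1 - m) (by linarith),
    max_eq_left (a := 1 - (m + h)) (by linarith)]
  rcases le_total t m with htm | htm
  · rw [max_eq_right (by linarith), abs_of_nonpos (by linarith)]
    field_simp
    ring
  · rw [max_eq_left (by linarith), abs_of_nonneg (by linarith)]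
    field_simp
    ring

lemma Zfn_eq_zero {k j : ℕ} {t : ℝ}
    (h : t < ((j:ℝ) - 1) / 2 ^ k ∨ (j:ℝ) / 2 ^ k < t) : Zfn k j t = 0 := by
  rw [Zfn, if_neg]
  rintro ⟨h1, h2⟩
  rcases h with h | h <;> linarith

/-- A centred tent is orthogonal to affine functions. -/
lemma integral_affine_mul_tent (α β m A : ℝ) {h : ℝ} (hh : 0 < h) :
    ∫ t in (m - h)..(m + h), (α + β * t) * (A * (1/2 - |t - m| / h)) = 0 := by
  have hc : Continuous fun t : ℝ => (α + β * t) * (A * (1/2 - |t - m| / h)) := by fun_prop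
  have key (σ u v : ℝ) :
      ∫ t in u..v, (α + β * t) * (A * (1/2 - σ * (t - m) / h)) =
        A * (((α + β * m) * (v - m) / 2 + β * (v - m) ^ 2 / 4
            - σ * ((α + β * m) * (v - m) ^ 2 / 2 + β * (v - m) ^ 3 / 3) / h)
          - ((α + β * m) * (u - m) / 2 + β * (u - m) ^ 2 / 4
            - σ * ((α + β * m) * (u - m) ^ 2 / 2 + β * (u - m) ^ 3 / 3) / h)) := by
    rw [mul_sub]
    refine intervalIntegral.integral_eq_sub_of_hasDerivAt
      (f := fun v => A * ((α + β * m) * (v - m) / 2 + β * (v - m) ^ 2 / 4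
            - σ * ((α + β * m) * (v - m) ^ 2 / 2 + β * (v - m) ^ 3 / 3) / h))
      (fun x _ => ?_) (Continuous.intervalIntegrable (by fun_prop) _ _)
    have d := (hasDerivAt_id x).sub_const m
    have d1 := (d.const_mul (α + β * m)).div_const 2
    have d2 := ((d.pow 2).const_mul β).div_const 4
    have d3 := ((d.pow 2).const_mul (α + β * m)).div_const 2
    have d4 := ((d.pow 3).const_mul β).div_const 3
    refine ((((d1.add d2).sub (((d3.add d4).const_mul σ).div_const h)).const_mul A)).congr_deriv ?_
    simp only [id]
    push_cast
    ring
  rw [← intervalIntegral.integral_add_adjacent_intervals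
    (hc.intervalIntegrable (m - h) m) (hc.intervalIntegrable m (m + h))]
  have l : ∫ t in (m - h)..m, (α + β * t) * (A * (1/2 - |t - m| / h)) =
      ∫ t in (m - h)..m, (α + β * t) * (A * (1/2 - (-1) * (t - m) / h)) := by
    refine intervalIntegral.integral_congr fun t ht => ?_
    rw [uIcc_of_le (by linarith)] at ht
    simp only [abs_of_nonpos (sub_nonpos.2 ht.2), neg_one_mul]
  have r : ∫ t in m..(m + h), (α + β * t) * (A * (1/2 - |t - m| / h)) =
      ∫ t in m..(m + h), (α + β * t) * (A * (1/2 - 1 * (t - m) / h)) := by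
    refine intervalIntegral.integral_congr fun t ht => ?_
    rw [uIcc_of_le (by linarith)] at ht
    simp only [abs_of_nonneg (sub_nonneg.2 ht.1), one_mul]
  rw [l, r, key, key]
  field_simp
  ring

/-- Dyadic nesting: on the open support of a function of the same or a finer level, any other
`Z_{k,j}` is affine. -/
lemma Zfn_affine {k j k' j' : ℕ} (hj1 : 1 ≤ j) (hj2 : j ≤ 2 ^ k) (hk : k ≤ k')
    (hne : (k, j) ≠ (k', j')) :
    ∃ α β : ℝ, ∀ t ∈ Ioo (((j':ℝ) - 1) / 2 ^ k') ((j':ℝ) / 2 ^ k'), Zfn k j t = α + β * t := by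
  obtain ⟨d, rfl⟩ := Nat.exists_eq_add_of_le hk
  have hP : (0:ℝ) < 2 ^ k := by positivity
  have hN : (0:ℝ) < 2 ^ d := by positivity
  -- Comparisons between nodes of the two levels reduce to comparisons of numerators.
  have up {c : ℝ} (hc : (j':ℝ) ≤ c * 2 ^ d) : (j':ℝ) / 2 ^ (k + d) ≤ c / 2 ^ k := by
    rw [pow_add, div_le_div_iff₀ (by positivity) hP]
    nlinarith
  have lo {c : ℝ} (hc : c * 2 ^ d ≤ (j':ℝ) - 1) : c / 2 ^ k ≤ ((j':ℝ) - 1) / 2 ^ (k + d) := by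
    rw [pow_add, div_le_div_iff₀ hP (by positivity)]
    nlinarith
  by_cases c1 : j' ≤ (j - 1) * 2 ^ d
  · refine ⟨0, 0, fun t ht => ?_⟩
    have c1R : (j':ℝ) ≤ ((j:ℝ) - 1) * 2 ^ d := by
      have : (j':ℝ) ≤ ((j - 1 : ℕ) : ℝ) * 2 ^ d := by exact_mod_cast c1
      rwa [Nat.cast_sub hj1, Nat.cast_one] at this
    rw [Zfn_eq_zero (Or.inl (ht.2.trans_le (up c1R)))]
    simp
  by_cases c2 : j * 2 ^ d + 1 ≤ j'
  · refine ⟨0, 0, fun t ht => ?_⟩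
    have c2R : (j:ℝ) * 2 ^ d + 1 ≤ (j':ℝ) := by exact_mod_cast c2
    rw [Zfn_eq_zero (Or.inr ((lo (by linarith)).trans_lt ht.1))]
    simp
  rcases d with _ | d
  · exact absurd (show (k, j) = (k + 0, j') by simp at c1 c2 ⊢; omega) hne
  push Not at c1 c2
  have c1' : (j - 1) * 2 ^ (d + 1) + 1 ≤ j' := c1
  have c1R : ((j:ℝ) - 1) * 2 ^ (d + 1) + 1 ≤ j' := by
    have : ((j - 1 : ℕ) : ℝ) * 2 ^ (d + 1) + 1 ≤ (j':ℝ) := by exact_mod_cast c1'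
    rwa [Nat.cast_sub hj1, Nat.cast_one] at this
  have c2R : (j':ℝ) ≤ j * 2 ^ (d + 1) := by exact_mod_cast Nat.lt_succ_iff.1 c2
  have inA := lo (c := (j:ℝ) - 1) (by linarith)
  have inB := up c2R
  -- The midpoint of the coarse support is also a node of the finer level.
  have mid : ((j:ℝ) - 1/2) * 2 ^ (d + 1) = ((j - 1 : ℕ) : ℝ) * 2 ^ (d + 1) + 2 ^ d := by
    rw [Nat.cast_sub hj1, Nat.cast_one]; ring
  by_cases c3 : j' ≤ (j - 1) * 2 ^ (d + 1) + 2 ^ d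
  · have c3R : (j':ℝ) ≤ ((j:ℝ) - 1/2) * 2 ^ (d + 1) := by rw [mid]; exact_mod_cast c3
    refine ⟨2 ^ k * Real.sqrt 12 * (1/2 - ((j:ℝ) - 1/2) / 2 ^ k / (1 / 2 ^ k / 2)),
      2 ^ k * Real.sqrt 12 / (1 / 2 ^ k / 2), fun t ht => ?_⟩
    rw [Zfn_eq hj1 hj2 (by linarith [ht.1]) (by linarith [ht.2]),
      abs_of_nonpos (by linarith [ht.2, up c3R])]
    ring
  · have c3R : ((j:ℝ) - 1/2) * 2 ^ (d + 1) ≤ (j':ℝ) - 1 := by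
      push Not at c3
      have : (j - 1) * 2 ^ (d + 1) + 2 ^ d + 1 ≤ j' := c3
      rw [mid, le_sub_iff_add_le]; exact_mod_cast this
    refine ⟨2 ^ k * Real.sqrt 12 * (1/2 + ((j:ℝ) - 1/2) / 2 ^ k / (1 / 2 ^ k / 2)),
      -(2 ^ k * Real.sqrt 12 / (1 / 2 ^ k / 2)), fun t ht => ?_⟩
    rw [Zfn_eq hj1 hj2 (by linarith [ht.1]) (by linarith [ht.2]),
      abs_of_nonneg (by linarith [ht.1, lo c3R])]
    ring

lemma Zfn_orthogonal_of_le {k j k' j' : ℕ} (hj1 : 1 ≤ j) (hj2 : j ≤ 2 ^ k)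
    (hj1' : 1 ≤ j') (hj2' : j' ≤ 2 ^ k') (hk : k ≤ k') (hne : (k, j) ≠ (k', j')) :
    ∫ t in (0:ℝ)..1, Zfn k j t * Zfn k' j' t = 0 := by
  obtain ⟨α, β, haff⟩ := Zfn_affine hj1 hj2 hk hne
  have hj1R : (1:ℝ) ≤ j' := by exact_mod_cast hj1'
  have hj2R : (j':ℝ) ≤ 2 ^ k' := by exact_mod_cast hj2'
  have hP : (0:ℝ) < 2 ^ k' := by positivity
  have a0 : 0 ≤ ((j':ℝ) - 1) / 2 ^ k' := div_nonneg (by linarith) hP.le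
  have b1 : (j':ℝ) / 2 ^ k' ≤ 1 := (div_le_one hP).2 hj2R
  obtain ⟨h1, h2⟩ := haar_nodes k' j'
  have ea : ((j':ℝ) - 1/2) / 2 ^ k' - 1 / 2 ^ k' / 2 = ((j':ℝ) - 1) / 2 ^ k' := by ring
  have eb : ((j':ℝ) - 1/2) / 2 ^ k' + 1 / 2 ^ k' / 2 = (j':ℝ) / 2 ^ k' := by ring
  have tent := integral_affine_mul_tent α β (((j':ℝ) - 1/2) / 2 ^ k')
    (2 ^ k' * Real.sqrt 12) (h := 1 / 2 ^ k' / 2) (by positivity)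
  rw [ea, eb, intervalIntegral.integral_of_le (by linarith), integral_Ioc_eq_integral_Ioo] at tent
  rw [intervalIntegral.integral_of_le zero_le_one, ← integral_Icc_eq_integral_Ioc,
    setIntegral_eq_of_subset_of_forall_sdiff_eq_zero measurableSet_Icc
      (Icc_subset_Icc a0 b1) (fun t ht => ?_),
    integral_Icc_eq_integral_Ioo, ← tent]
  · refine setIntegral_congr_fun measurableSet_Ioo fun t ht => ?_
    rw [haff t ht, Zfn_eq hj1' hj2' ht.1.le ht.2.le]
  · rw [Zfn_eq_zero (k := k'), mul_zero]
    by_contra! hc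
    exact ht.2 hc

theorem Zfn_orthogonal (k j k' j' : ℕ) (hj1 : 1 ≤ j) (hj2 : j ≤ 2 ^ k)
    (hj1' : 1 ≤ j') (hj2' : j' ≤ 2 ^ k') (hne : (k, j) ≠ (k', j')) :
    ∫ t in (0:ℝ)..1, Zfn k j t * Zfn k' j' t = 0 := by
  rcases le_total k k' with hk | hk
  · exact Zfn_orthogonal_of_le hj1 hj2 hj1' hj2' hk hne
  · simp_rw [mul_comm (Zfn k j _)]
    exact Zfn_orthogonal_of_le hj1' hj2' hj1 hj2 hk hne.symm
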